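/- Let (η(x))_{x∈ℤ} be i.i.d. Bernoulli(λ) random variables with 0 < λ < 1/2, and let ξ be the walk lift of η with ξ(0) = 0. Then almost surely min_{y≤x} ξ(y) > −∞ for every x, and the reflected process W(x) := ξ(x) − min_{y≤x} ξ(y) satisfies, for every x ∈ ℤ and every integer k ≥ 0, P(W(x) ≥ k) = (λ/(1−λ))^k; that is, W(x) is geometrically distributed with ratio λ/(1−λ). -/

import Mathlib

open MeasureTheory Filter Finset

/-- A ball configuration: a box at each integer, occupied (`true`) or empty (`false`). -/
abbrev Cfg := ℤ → Bool

/-- Numerical (integer) value of a box. -/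
def valZ (b : Bool) : ℤ := if b then 1 else 0

/-- Numerical (real) value of a box. -/
def valR (b : Bool) : ℝ := if b then 1 else 0

/-- `x` is a record of the configuration `η`:
for every `z ≤ x`, the number of balls in `[z,x]` is strictly smaller than the
number of empty boxes in `[z,x]`. -/
def isRecord (η : Cfg) (x : ℤ) : Prop :=
  ∀ z ≤ x, (∑ y ∈ Finset.Icc z x, valZ (η y)) < ∑ y ∈ Finset.Icc z x, (1 - valZ (η y))

open Classical in
/-- The box-ball (Takahashi–Satsuma) operator `T`. -/
noncomputable def bbsT (η : Cfg) : Cfg := fun x => if isRecord η x then false else !(η x)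

/-- `η` has asymptotic density `lam` of balls on both half lines. -/
def inXlam (lam : ℝ) (η : Cfg) : Prop :=
  Tendsto (fun y : ℕ => (∑ x ∈ Finset.Icc (-(y : ℤ)) 0, valR (η x)) / (y : ℝ))
    atTop (nhds lam) ∧
  Tendsto (fun y : ℕ => (∑ x ∈ Finset.Icc (0 : ℤ) (y : ℤ), valR (η x)) / (y : ℝ))
    atTop (nhds lam)

/-- `η ∈ 𝒳`: it has a well-defined density `0 < lam < 1/2`. -/
def inX (η : Cfg) : Prop := ∃ lam : ℝ, 0 < lam ∧ lam < 1 / 2 ∧ inXlam lam η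

/-- `ξ` is a walk lift of the configuration `η`. -/
def IsLift (η : Cfg) (ξ : ℤ → ℤ) : Prop :=
  ∀ x : ℤ, ξ x - ξ (x - 1) = 2 * valZ (η x) - 1

/-- Running minimum `min_{y ≤ x} ξ(y)` of a walk. -/
noncomputable def runMin (ξ : ℤ → ℤ) (x : ℤ) : ℤ := sInf (ξ '' Set.Iic x)

/-- The box-ball operator on walks: reflection at the running minimum. -/
noncomputable def liftT (ξ : ℤ → ℤ) : ℤ → ℤ := fun x => 2 * runMin ξ x - ξ x

/-- The canonical walk lift of `η` with value `0` at the origin. -/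
noncomputable def xi0 (η : Cfg) : ℤ → ℤ := fun x =>
  if 0 ≤ x then ∑ y ∈ Finset.Icc 1 x, (2 * valZ (η y) - 1)
  else -∑ y ∈ Finset.Icc (x + 1) 0, (2 * valZ (η y) - 1)

/-!
Let `F k` be the probability that the walk climbs by at least `k` over some window ending at `x`.
Splitting according to the last step, which is independent of the past, gives
`F (k + 1) = lam * F k + (1 - lam) * F (k + 2)` and `F 0 = 1`. The solutions of this recursion are
spanned by `1` and `r ^ k` with `r = lam / (1 - lam)`, so `F k = r ^ k` as soon as `F` vanishes at
infinity. That holds because the same recursion, run over windows of bounded length `n`, starts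
below `r ^ k` at `n = 0` and therefore stays below it. Letting `k → ∞`, the walk is almost surely
bounded below on each left half line, and then climbing by `k` means `k ≤ W x`.
-/

section Walk

variable {η : Cfg} {ξ : ℤ → ℤ} {x y : ℤ} {n k : ℕ}

theorem isLift_xi0 (η : Cfg) : IsLift η (xi0 η) := by
  intro x
  unfold xi0
  rcases lt_trichotomy x 0 with hx | rfl | hx
  · rw [if_neg (by lia), if_neg (by lia), sub_add_cancel, ← insert_Icc_add_one_left_eq_Icc hx.le,
      sum_insert (by simp)]
    ring
  · simp
  · rw [if_pos hx.le, if_pos (by lia), ← insert_Icc_sub_one_right_eq_Icc (by lia : 1 ≤ x),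
      sum_insert (by simp)]
    ring

theorem IsLift.sub_eq_sum_Ioc (hξ : IsLift η ξ) (hyx : y ≤ x) :
    ξ x - ξ y = ∑ z ∈ Ioc y x, (2 * valZ (η z) - 1) := by
  induction x, hyx using Int.leInduction with
  | base => simp
  | succ x hyx ih =>
    have hstep := hξ (x + 1)
    rw [add_sub_cancel_right] at hstep
    rw [← insert_Ioc_right_eq_Ioc_add_one hyx, sum_insert (by simp), ← ih, ← hstep]
    ring

theorem bddBelow_image_Iic_of_forall_sub_lt {c : ℤ} (h : ∀ y ≤ x, ξ x - ξ y < c) :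
    BddBelow (ξ '' Set.Iic x) :=
  ⟨ξ x - c, Set.forall_mem_image.2 fun _ hy => (sub_lt_comm.1 (h _ hy)).le⟩

theorem le_sub_runMin_iff (hbdd : BddBelow (ξ '' Set.Iic x)) {c : ℤ} :
    c ≤ ξ x - runMin ξ x ↔ ∃ y ≤ x, c ≤ ξ x - ξ y := by
  constructor
  · intro hc
    obtain ⟨y, hyx, hy⟩ : runMin ξ x ∈ ξ '' Set.Iic x :=
      Int.csInf_mem (Set.nonempty_Iic.image ξ) hbdd
    exact ⟨y, hyx, hy ▸ hc⟩
  · rintro ⟨y, hyx, hc⟩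
    exact hc.trans (sub_le_sub_left (csInf_le hbdd (Set.mem_image_of_mem ξ hyx)) _)

/-- The walk `ξ` climbs by at least `k` over some window `[y, x]` of length at most `n`; in terms
of the walk reflected at its running minimum over `[x - n, x]`, its value at `x` is at least `k`. -/
def RisesWithin (ξ : ℤ → ℤ) (x : ℤ) (n k : ℕ) : Prop :=
  ∃ y ∈ Set.Icc (x - n) x, (k : ℤ) ≤ ξ x - ξ y

theorem risesWithin_zero_right : RisesWithin ξ x n 0 :=
  ⟨x, by simp, by simp⟩

theorem not_risesWithin_zero_succ : ¬ RisesWithin ξ x 0 (k + 1) := by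
  rintro ⟨y, hy, hrise⟩
  obtain rfl : y = x := by simpa using hy
  lia

theorem monotone_risesWithin : Monotone fun n => RisesWithin ξ x n k := by
  rintro m n hmn ⟨y, ⟨hxy, hyx⟩, hrise⟩
  exact ⟨y, ⟨by lia, hyx⟩, hrise⟩

theorem exists_risesWithin_iff :
    (∃ n, RisesWithin ξ x n k) ↔ ∃ y ≤ x, (k : ℤ) ≤ ξ x - ξ y :=
  ⟨fun ⟨_, y, hy, hrise⟩ => ⟨y, hy.2, hrise⟩,
    fun ⟨y, hyx, hrise⟩ => ⟨(x - y).toNat, y, ⟨by lia, hyx⟩, hrise⟩⟩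

theorem IsLift.risesWithin_succ_succ_iff (hξ : IsLift η ξ) :
    RisesWithin ξ x (n + 1) (k + 1) ↔
      RisesWithin ξ (x - 1) n (if η x = true then k else k + 2) := by
  have hstep : ξ x - ξ (x - 1) = 2 * (if η x = true then 1 else 0) - 1 := hξ x
  constructor
  · rintro ⟨y, ⟨hxy, hyx⟩, hrise⟩
    have hne : y ≠ x := by rintro rfl; lia
    exact ⟨y, ⟨by lia, by lia⟩, by split_ifs at hstep ⊢ <;> lia⟩
  · rintro ⟨y, ⟨hxy, hyx⟩, hrise⟩
    exact ⟨y, ⟨by lia, by lia⟩, by split_ifs at hstep hrise <;> lia⟩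

end Walk

section Recursion

variable {lam : ℝ}

theorem tendsto_div_one_sub_pow_nhds_zero (h0 : 0 ≤ lam) (h1 : lam < 1 / 2) :
    Tendsto (fun k : ℕ => (lam / (1 - lam)) ^ k) atTop (nhds 0) :=
  tendsto_pow_atTop_nhds_zero_of_lt_one (div_nonneg h0 (by linarith))
    ((div_lt_one (by linarith)).2 (by linarith))

theorem eq_mul_div_pow_of_tendsto_zero {F : ℕ → ℝ} (hlam : lam ≠ 1)
    (hrec : ∀ k, F (k + 1) = lam * F k + (1 - lam) * F (k + 2)) (hF : Tendsto F atTop (nhds 0))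
    (k : ℕ) : F k = F 0 * (lam / (1 - lam)) ^ k := by
  have hlam' : 1 - lam ≠ 0 := sub_ne_zero.2 hlam.symm
  set r := lam / (1 - lam) with hr
  -- The characteristic roots are `1` and `r`; cancelling the root `r` leaves a constant sequence.
  have hconst : ∀ k, F (k + 1) - r * F k = F 1 - r * F 0 := by
    intro k
    induction k with
    | zero => rfl
    | succ k ih =>
      rw [← ih]
      refine mul_left_cancel₀ hlam' ?_
      rw [hr]
      field_simp
      linear_combination -hrec k
  have hlim : Tendsto (fun k => F (k + 1) - r * F k) atTop (nhds 0) := by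
    simpa using ((tendsto_add_atTop_iff_nat 1).2 hF).sub (hF.const_mul r)
  have hzero : F 1 - r * F 0 = 0 :=
    tendsto_nhds_unique (by simp only [hconst]; exact tendsto_const_nhds) hlim
  have hgeom : ∀ k, F (k + 1) = r * F k := fun k => sub_eq_zero.1 ((hconst k).trans hzero)
  induction k with
  | zero => simp
  | succ k ih => rw [hgeom, ih, pow_succ]; ring

/-- The probability that a walk with i.i.d. steps, equal to `1` with probability `lam` and to `-1`
otherwise, climbs by at least `k` over some window of length at most `n` with a fixed right end,
given through the recursion obtained by conditioning on the last step. -/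
noncomputable def riseProb (lam : ℝ) : ℕ → ℕ → ℝ
  | _, 0 => 1
  | 0, _ + 1 => 0
  | n + 1, k + 1 => lam * riseProb lam n k + (1 - lam) * riseProb lam n (k + 2)

@[simp]
theorem riseProb_zero_right (lam : ℝ) (n : ℕ) : riseProb lam n 0 = 1 := by
  simp [riseProb]

theorem riseProb_le_pow (h0 : 0 ≤ lam) (h1 : lam < 1) (n k : ℕ) :
    riseProb lam n k ≤ (lam / (1 - lam)) ^ k := by
  have hlam : 0 < 1 - lam := sub_pos.2 h1
  induction n generalizing k with
  | zero =>
    cases k with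
    | zero => simp
    | succ k => simpa only [riseProb] using pow_nonneg (div_nonneg h0 hlam.le) (k + 1)
  | succ n ih =>
    cases k with
    | zero => simp
    | succ k =>
      calc riseProb lam (n + 1) (k + 1)
          = lam * riseProb lam n k + (1 - lam) * riseProb lam n (k + 2) := by rw [riseProb]
        _ ≤ lam * (lam / (1 - lam)) ^ k + (1 - lam) * (lam / (1 - lam)) ^ (k + 2) := by
          gcongr <;> exact ih _
        _ = (lam / (1 - lam)) ^ (k + 1) := by
          simp only [pow_succ]
          field_simp
          ring

end Recursion

section Probability

open ProbabilityTheory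

variable {Ω : Type*}

theorem measurableSet_risesWithin {m : MeasurableSpace Ω} {η : Ω → Cfg} {ξ : Ω → ℤ → ℤ}
    (hξ : ∀ ω, IsLift (η ω) (ξ ω)) {x : ℤ} (hη : ∀ y ≤ x, Measurable fun ω => η ω y) (n k : ℕ) :
    MeasurableSet {ω | RisesWithin (ξ ω) x n k} := by
  have hincr : ∀ y ≤ x, Measurable fun ω => ξ ω x - ξ ω y := by
    intro y hyx
    simp only [fun ω => (hξ ω).sub_eq_sum_Ioc hyx]
    exact Finset.measurable_sum _ fun z hz =>
      (measurable_of_countable fun b => 2 * valZ b - 1).comp (hη z (mem_Ioc.1 hz).2)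
  have hunion : {ω | RisesWithin (ξ ω) x n k} =
      ⋃ y ∈ Set.Icc (x - n) x, {ω | (k : ℤ) ≤ ξ ω x - ξ ω y} := by
    ext ω
    simp only [RisesWithin, Set.mem_ofPred_eq, Set.mem_iUnion, exists_prop]
  rw [hunion]
  exact .biUnion (Set.to_countable _) fun y hy => hincr y hy.2 measurableSet_Ici

variable [MeasurableSpace Ω] {P : Measure Ω}

theorem indep_comap_iSup_Iio {ι β : Type*} [Preorder ι] [MeasurableSpace β] {X : ι → Ω → β}
    (hX : ∀ i, Measurable (X i)) (hindep : iIndepFun X P) (i : ι) :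
    Indep (MeasurableSpace.comap (X i) inferInstance)
      (⨆ j ∈ Set.Iio i, MeasurableSpace.comap (X j) inferInstance) P := by
  simpa only [_root_.iSup_singleton] using indep_iSup_of_disjoint (S := {i}) (T := Set.Iio i)
    (fun j => (hX j).comap_le) hindep (by simp)

variable {lam : ℝ} {η : Ω → Cfg} {ξ : Ω → ℤ → ℤ}

theorem measureReal_preimage_inter_risesWithin (hmeas : ∀ x, Measurable fun ω => η ω x)
    (hindep : iIndepFun (fun x ω => η ω x) P) (hξ : ∀ ω, IsLift (η ω) (ξ ω)) (B : Set Bool)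
    (x : ℤ) (n k : ℕ) :
    P.real ((fun ω => η ω x) ⁻¹' B ∩ {ω | RisesWithin (ξ ω) (x - 1) n k}) =
      P.real ((fun ω => η ω x) ⁻¹' B) * P.real {ω | RisesWithin (ξ ω) (x - 1) n k} := by
  have hpast := measurableSet_risesWithin hξ (x := x - 1)
    (m := ⨆ y ∈ Set.Iio x, .comap (fun ω => η ω y) inferInstance)
    (fun y hy => .of_comap_le (le_iSup₂_of_le y (Int.lt_of_le_sub_one hy) le_rfl)) n k
  simp only [measureReal_def, ← ENNReal.toReal_mul]
  rw [(Indep_iff _ _ _).1 (indep_comap_iSup_Iio hmeas hindep x) _ _ ⟨B, .of_discrete, rfl⟩ hpast]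

variable [IsProbabilityMeasure P]

theorem measureReal_risesWithin_succ_succ (hmeas : ∀ x, Measurable fun ω => η ω x)
    (hindep : iIndepFun (fun x ω => η ω x) P) (hξ : ∀ ω, IsLift (η ω) (ξ ω)) {x : ℤ}
    (hber : P.real {ω | η ω x = true} = lam) (n k : ℕ) :
    P.real {ω | RisesWithin (ξ ω) x (n + 1) (k + 1)} =
      lam * P.real {ω | RisesWithin (ξ ω) (x - 1) n k} +
        (1 - lam) * P.real {ω | RisesWithin (ξ ω) (x - 1) n (k + 2)} := by
  set A : Set Ω := (fun ω => η ω x) ⁻¹' {true}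
  have hA : MeasurableSet A := hmeas x .of_discrete
  have hPA : P.real A = lam := hber
  have hball : {ω | RisesWithin (ξ ω) x (n + 1) (k + 1)} ∩ A =
      A ∩ {ω | RisesWithin (ξ ω) (x - 1) n k} := by
    ext ω
    by_cases hω : η ω x = true <;> simp [A, (hξ ω).risesWithin_succ_succ_iff, hω]
  have hempty : {ω | RisesWithin (ξ ω) x (n + 1) (k + 1)} \ A =
      Aᶜ ∩ {ω | RisesWithin (ξ ω) (x - 1) n (k + 2)} := by
    ext ω
    by_cases hω : η ω x = true <;> simp [A, (hξ ω).risesWithin_succ_succ_iff, hω]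
  rw [← measureReal_inter_add_sdiff hA, hball, hempty,
    measureReal_preimage_inter_risesWithin hmeas hindep hξ, ← Set.preimage_compl,
    measureReal_preimage_inter_risesWithin hmeas hindep hξ, Set.preimage_compl,
    probReal_compl_eq_one_sub hA, hPA]

theorem measureReal_risesWithin (hmeas : ∀ x, Measurable fun ω => η ω x)
    (hindep : iIndepFun (fun x ω => η ω x) P) (hξ : ∀ ω, IsLift (η ω) (ξ ω))
    (hber : ∀ x, P.real {ω | η ω x = true} = lam) (x : ℤ) (n k : ℕ) :
    P.real {ω | RisesWithin (ξ ω) x n k} = riseProb lam n k := by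
  induction n generalizing x k with
  | zero =>
    cases k with
    | zero => simp [risesWithin_zero_right]
    | succ k => simp [not_risesWithin_zero_succ, riseProb]
  | succ n ih =>
    cases k with
    | zero => simp [risesWithin_zero_right]
    | succ k =>
      rw [measureReal_risesWithin_succ_succ hmeas hindep hξ (hber x), ih, ih, riseProb]

theorem tendsto_riseProb (hmeas : ∀ x, Measurable fun ω => η ω x)
    (hindep : iIndepFun (fun x ω => η ω x) P) (hξ : ∀ ω, IsLift (η ω) (ξ ω))
    (hber : ∀ x, P.real {ω | η ω x = true} = lam) (x : ℤ) (k : ℕ) :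
    Tendsto (fun n => riseProb lam n k) atTop
      (nhds (P.real {ω | ∃ y ≤ x, (k : ℤ) ≤ ξ ω x - ξ ω y})) := by
  have hunion : ⋃ n, {ω | RisesWithin (ξ ω) x n k} =
      {ω | ∃ y ≤ x, (k : ℤ) ≤ ξ ω x - ξ ω y} := by
    ext ω
    simp only [Set.mem_iUnion, Set.mem_ofPred_eq, exists_risesWithin_iff]
  have hmono : Monotone fun n => {ω | RisesWithin (ξ ω) x n k} :=
    fun _ _ hmn _ => monotone_risesWithin hmn
  have hlim := (ENNReal.tendsto_toReal (measure_ne_top P _)).comp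
    (tendsto_measure_iUnion_atTop (μ := P) hmono)
  rw [hunion] at hlim
  exact hlim.congr (measureReal_risesWithin hmeas hindep hξ hber x · k)

theorem measureReal_exists_le_sub (h1 : lam < 1 / 2) (hmeas : ∀ x, Measurable fun ω => η ω x)
    (hindep : iIndepFun (fun x ω => η ω x) P) (hξ : ∀ ω, IsLift (η ω) (ξ ω))
    (hber : ∀ x, P.real {ω | η ω x = true} = lam) (x : ℤ) (k : ℕ) :
    P.real {ω | ∃ y ≤ x, (k : ℤ) ≤ ξ ω x - ξ ω y} = (lam / (1 - lam)) ^ k := by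
  have h0 : 0 ≤ lam := hber 0 ▸ measureReal_nonneg
  set F : ℕ → ℝ := fun k => P.real {ω | ∃ y ≤ x, (k : ℤ) ≤ ξ ω x - ξ ω y}
  have hlim : ∀ k, Tendsto (fun n => riseProb lam n k) atTop (nhds (F k)) :=
    tendsto_riseProb hmeas hindep hξ hber x
  have hF0 : F 0 = 1 := tendsto_nhds_unique (hlim 0) (by simp)
  have hrec : ∀ k, F (k + 1) = lam * F k + (1 - lam) * F (k + 2) := by
    intro k
    refine tendsto_nhds_unique ((tendsto_add_atTop_iff_nat 1).2 (hlim (k + 1))) ?_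
    simp only [riseProb]
    exact ((hlim k).const_mul _).add ((hlim (k + 2)).const_mul _)
  have hle : ∀ k, F k ≤ (lam / (1 - lam)) ^ k := fun k =>
    le_of_tendsto' (hlim k) fun n => riseProb_le_pow h0 (by linarith) n k
  have hF : Tendsto F atTop (nhds 0) :=
    squeeze_zero (fun _ => measureReal_nonneg) hle (tendsto_div_one_sub_pow_nhds_zero h0 h1)
  simpa only [hF0, one_mul] using eq_mul_div_pow_of_tendsto_zero (by linarith) hrec hF k

theorem ae_bddBelow_image_Iic (h1 : lam < 1 / 2) (hmeas : ∀ x, Measurable fun ω => η ω x)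
    (hindep : iIndepFun (fun x ω => η ω x) P) (hξ : ∀ ω, IsLift (η ω) (ξ ω))
    (hber : ∀ x, P.real {ω | η ω x = true} = lam) :
    ∀ᵐ ω ∂P, ∀ x, BddBelow (ξ ω '' Set.Iic x) := by
  refine ae_all_iff.2 fun x => ?_
  have h0 : 0 ≤ lam := hber 0 ▸ measureReal_nonneg
  have hle : ∀ k, P.real {ω | ¬ BddBelow (ξ ω '' Set.Iic x)} ≤ (lam / (1 - lam)) ^ k := by
    intro k
    rw [← measureReal_exists_le_sub h1 hmeas hindep hξ hber x k]
    refine measureReal_mono fun ω (hω : ¬ BddBelow _) => ?_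
    contrapose! hω
    simp only [Set.mem_ofPred_eq, not_exists, not_and, not_le] at hω
    exact bddBelow_image_Iic_of_forall_sub_lt hω
  have hnull : P.real {ω | ¬ BddBelow (ξ ω '' Set.Iic x)} = 0 :=
    (ge_of_tendsto' (tendsto_div_one_sub_pow_nhds_zero h0 h1) hle).antisymm measureReal_nonneg
  exact (measureReal_eq_zero_iff).1 hnull

theorem reflected_walk_geometric_general (h1 : lam < 1 / 2)
    (hmeas : ∀ x, Measurable fun ω => η ω x) (hindep : iIndepFun (fun x ω => η ω x) P)
    (hξ : ∀ ω, IsLift (η ω) (ξ ω)) (hber : ∀ x, P.real {ω | η ω x = true} = lam) :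
    (∀ᵐ ω ∂P, ∀ x, BddBelow (ξ ω '' Set.Iic x)) ∧
    ∀ (x : ℤ) (k : ℕ),
      P {ω | (k : ℤ) ≤ ξ ω x - runMin (ξ ω) x} = ENNReal.ofReal ((lam / (1 - lam)) ^ k) := by
  have hbdd := ae_bddBelow_image_Iic h1 hmeas hindep hξ hber
  refine ⟨hbdd, fun x k => ?_⟩
  rw [← measureReal_exists_le_sub h1 hmeas hindep hξ hber x k, ofReal_measureReal]
  refine measure_congr ?_
  filter_upwards [hbdd] with ω hω
  exact propext (le_sub_runMin_iff (hω x))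

end Probability

open MeasureTheory ProbabilityTheory in
/-- Let `(η(x))_{x∈ℤ}` be i.i.d. Bernoulli(`lam`) with
`0 < lam < 1/2` and let `ξ` be the walk lift of `η` with `ξ(0) = 0`.  Then
almost surely `min_{y≤x} ξ(y) > −∞` for every `x`, and the reflected process
`W(x) = ξ(x) − min_{y≤x} ξ(y)` satisfies `P(W(x) ≥ k) = (lam/(1−lam))^k` for
every `x ∈ ℤ` and integer `k ≥ 0`: `W(x)` is geometric with ratio
`lam/(1−lam)`. -/
theorem reflected_walk_geometric {Ω : Type*} [MeasurableSpace Ω]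
    (P : Measure Ω) [IsProbabilityMeasure P] (lam : ℝ) (h0 : 0 < lam)
    (h1 : lam < 1 / 2) (η : Ω → Cfg) (hmeas : ∀ x : ℤ, Measurable fun ω => η ω x)
    (hindep : iIndepFun (fun x ω => η ω x) P)
    (hber : ∀ x : ℤ, P {ω | η ω x = true} = ENNReal.ofReal lam) :
    (∀ᵐ ω ∂P, ∀ x : ℤ, BddBelow (xi0 (η ω) '' Set.Iic x)) ∧
    ∀ (x : ℤ) (k : ℕ),
      P {ω | (k : ℤ) ≤ xi0 (η ω) x - runMin (xi0 (η ω)) x} =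
        ENNReal.ofReal ((lam / (1 - lam)) ^ k) := by
  refine reflected_walk_geometric_general h1 hmeas hindep (fun ω => isLift_xi0 (η ω)) fun x => ?_
  rw [measureReal_def, hber x, ENNReal.toReal_ofReal h0.le]
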